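/- arXiv:1606.07850 — 2 statements merged into one kernel-verified Lean document; each statement's English description precedes it below -/
import Mathlib

section
/- Let b > 0, let l ≥ -1/2 be real, let ω > 0, and let q : [0,b] → ℂ be continuous. Define d(x) = Σ_{m=0}^∞ (-1)^m/(m!·Γ(m+l+3/2))·(ω/2)^{2m+l+1/2}·x^{2m+l+1} (so d(x) = √x·J_{l+1/2}(ωx)). Let N ∈ ℕ and let K_N(x,t) = Σ_{n=0}^N κ_n(x)·t^{2n+l+1}, where each κ_n is continuous on [0,b] and twice continuously differentiable on (0,b], and assume K_N satisfies ∂²K_N/∂x² - ∂²K_N/∂t² - (l(l+1)/x²)K_N + (l(l+1)/t²)K_N - q(x)K_N = 0 for all x, t ∈ (0,b]. Set q_N(x) = 2·d/dx[K_N(x,x)] and u_N(x) = d(x) + ∫₀ˣ K_N(x,t)·d(t) dt. Then for every x ∈ (0,b], u_N''(x) - (l(l+1)/x² + q(x))·u_N(x) + ω²·u_N(x) = (q_N(x) - q(x))·d(x). -/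
lemma aux_ps_summ (c : ℕ → ℝ) (hc : ∀ r : ℝ, 0 ≤ r → Summable (fun m => |c m| * r ^ m)) :
    ∀ r : ℝ, 0 ≤ r → Summable (fun m : ℕ => |((m:ℝ)+1) * c (m+1)| * r ^ m) := by
  intro r hr
  have h1 := (summable_nat_add_iff 1).2 (hc (2 * (r + 1)) (by positivity))
  refine Summable.of_nonneg_of_le (fun m => by positivity) (fun m => ?_) h1
  rw [abs_mul, abs_of_nonneg (by positivity : (0:ℝ) ≤ (m:ℝ)+1), mul_pow]
  have h2 : (m:ℝ) + 1 ≤ 2 ^ (m+1) := by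
    have : m + 1 < 2 ^ (m+1) := Nat.lt_two_pow_self
    exact_mod_cast this.le
  have h3 : r ^ m ≤ (r+1)^(m+1) := by
    calc r ^ m ≤ (r+1)^m := by gcongr; linarith
      _ ≤ (r+1)^(m+1) := pow_le_pow_right₀ (by linarith) (by omega)
  calc ((m:ℝ)+1) * |c (m+1)| * r^m ≤ 2^(m+1) * |c (m+1)| * (r+1)^(m+1) := by gcongr
    _ = _ := by ring

lemma aux_ps_summ' (c : ℕ → ℝ) (hc : ∀ r : ℝ, 0 ≤ r → Summable (fun m => |c m| * r ^ m)) (y : ℝ) :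
    Summable (fun m => c m * y ^ m) := by
  refine Summable.of_norm ?_
  simpa [abs_mul, abs_pow] using hc |y| (abs_nonneg y)

lemma aux_ps_deriv (c : ℕ → ℝ) (hc : ∀ r : ℝ, 0 ≤ r → Summable (fun m => |c m| * r ^ m)) (y : ℝ) :
    HasDerivAt (fun y => ∑' m, c m * y ^ m) (∑' m : ℕ, (((m:ℝ)+1) * c (m+1)) * y ^ m) y := by
  have hs := aux_ps_summ c hc
  have key := hasDerivAt_tsum_of_isPreconnected
    (g := fun m y => c m * y ^ m) (g' := fun m y => c m * (m * y ^ (m-1)))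
    (u := fun m => |c m| * (m * (|y|+1) ^ (m-1)))
    (t := Metric.ball (0:ℝ) (|y|+1)) (y₀ := y) (y := y) ?_ Metric.isOpen_ball
    (convex_ball _ _).isPreconnected ?_ ?_ ?_ (aux_ps_summ' c hc y) ?_
  · refine HasDerivAt.congr_deriv key ?_
    rw [Summable.tsum_eq_zero_add]
    · simp only [Nat.cast_zero, zero_mul, mul_zero, zero_add, Nat.cast_add, Nat.cast_one, Nat.add_sub_cancel]
      refine tsum_congr (fun m => by ring)
    · refine (summable_nat_add_iff 1).1 ?_
      refine (aux_ps_summ' _ hs y).congr (fun m => ?_)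
      simp only [Nat.cast_add, Nat.cast_one, Nat.add_sub_cancel]
      ring
  · refine (summable_nat_add_iff 1).1 ?_
    refine (hs (|y|+1) (by positivity)).congr (fun m => ?_)
    simp only [Nat.cast_add, Nat.cast_one, Nat.add_sub_cancel]
    rw [abs_mul, abs_of_nonneg (by positivity : (0:ℝ) ≤ (m:ℝ)+1)]
    ring
  · intro m z _
    exact (hasDerivAt_pow m z).const_mul _
  · intro m z hz
    have hz' : |z| ≤ |y| + 1 := by
      have := Metric.mem_ball.1 hz
      rw [Real.dist_eq, sub_zero] at this
      exact this.le
    rw [Real.norm_eq_abs, abs_mul, abs_mul, abs_pow, Nat.abs_cast]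
    gcongr
  · simp
  · simp

lemma aux_G (l ω : ℝ) (hl : -(1/2) ≤ l) (hω : 0 < ω)
    (d : ℝ → ℝ)
    (hd : ∀ x : ℝ, d x = ∑' m : ℕ,
        (-1 : ℝ) ^ m / ((m.factorial : ℝ) * Real.Gamma ((m : ℝ) + l + 3/2)) *
          (ω / 2) ^ (2 * (m : ℝ) + l + 1/2) * x ^ (2 * (m : ℝ) + l + 1)) :
    ∃ G G1 G2 : ℝ → ℝ, (∀ y, HasDerivAt G (G1 y) y) ∧ (∀ y, HasDerivAt G1 (G2 y) y) ∧
      (∀ y, y * G2 y + (l + 3/2) * G1 y + ω^2/4 * G y = 0) ∧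
      ∀ x, 0 ≤ x → d x = x ^ (l+1) * G (x^2) := by
  set c : ℕ → ℝ := fun m => (-1 : ℝ) ^ m / ((m.factorial : ℝ) * Real.Gamma ((m : ℝ) + l + 3/2)) *
          (ω / 2) ^ (2 * (m : ℝ) + l + 1/2) with hcdef
  have hrec : ∀ m : ℕ, ((m:ℝ)+1) * ((m:ℝ)+l+3/2) * c (m+1) = - (ω^2/4) * c m := by
    intro m
    have hm : (0:ℝ) ≤ m := Nat.cast_nonneg m
    have hpos : 0 < (m:ℝ)+l+3/2 := by linarith
    have hG : Real.Gamma (((m+1:ℕ):ℝ) + l + 3/2) = ((m:ℝ)+l+3/2) * Real.Gamma ((m:ℝ)+l+3/2) := by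
      rw [← Real.Gamma_add_one hpos.ne']
      congr 1; push_cast; ring
    have hp : (ω/2) ^ (2 * ((m+1:ℕ):ℝ) + l + 1/2) = (ω/2) ^ (2 * (m:ℝ) + l + 1/2) * (ω/2)^2 := by
      rw [← Real.rpow_natCast (ω/2) 2, ← Real.rpow_add (by positivity)]
      congr 1; push_cast; ring
    have hΓ := (Real.Gamma_pos_of_pos hpos).ne'
    simp only [hcdef]
    rw [hG, hp, Nat.factorial_succ]
    push_cast
    have h1 : (m.factorial:ℝ) ≠ 0 := by positivity
    have h2 : (m:ℝ)+1 ≠ 0 := by positivity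
    have h3 := hpos.ne'
    generalize (ω/2) ^ (2 * (m:ℝ) + l + 1/2) = P
    generalize Real.Gamma ((m:ℝ)+l+3/2) = Γ at *
    generalize hA : (m:ℝ)+l+3/2 = A at *
    field_simp
    ring
  have hd' : ∀ x : ℝ, d x = ∑' m : ℕ, c m * x ^ (2 * (m : ℝ) + l + 1) := hd
  clear_value c
  have hb : ∀ m : ℕ, |c m| ≤ |c 0| * ((ω^2/4)^m / m.factorial) := by
    intro m
    induction m with
    | zero => simp
    | succ m ih =>
      have hm : (0:ℝ) ≤ m := Nat.cast_nonneg m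
      have h := congrArg abs (hrec m)
      rw [abs_mul, abs_mul, abs_mul, abs_neg, abs_of_nonneg (by positivity : (0:ℝ) ≤ (m:ℝ)+1),
        abs_of_nonneg (by linarith : (0:ℝ) ≤ (m:ℝ)+l+3/2),
        abs_of_nonneg (by positivity : (0:ℝ) ≤ ω^2/4)] at h
      have h2 : ((m:ℝ)+1) * |c (m+1)| ≤ ω^2/4 * |c m| := by
        rw [← h]
        nlinarith [mul_nonneg (by positivity : 0 ≤ ((m:ℝ)+1) * |c (m+1)|) (by linarith : 0 ≤ (m:ℝ)+l+1/2)]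
      have h3 : ((m:ℝ)+1) * |c (m+1)| ≤ ω^2/4 * (|c 0| * ((ω^2/4)^m / m.factorial)) :=
        h2.trans (by gcongr)
      rw [Nat.factorial_succ]
      push_cast
      have : |c (m+1)| ≤ ω^2/4 * (|c 0| * ((ω^2/4)^m / m.factorial)) / ((m:ℝ)+1) := by
        rw [le_div_iff₀ (by positivity)]; linarith
      refine this.trans (le_of_eq ?_)
      field_simp
      ring
  have hc : ∀ r : ℝ, 0 ≤ r → Summable (fun m => |c m| * r ^ m) := by
    intro r hr
    refine Summable.of_nonneg_of_le (fun m => by positivity) (fun m => ?_)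
      ((Real.summable_pow_div_factorial (ω^2/4*r)).mul_left |c 0|)
    calc |c m| * r^m ≤ |c 0| * ((ω^2/4)^m / m.factorial) * r^m := by gcongr; exact hb m
      _ = _ := by rw [mul_pow]; ring
  have hc1 := aux_ps_summ c hc
  refine ⟨_, _, _, aux_ps_deriv c hc, aux_ps_deriv _ hc1, ?_, ?_⟩
  · intro y
    have hc2 := aux_ps_summ _ hc1
    have s0 := aux_ps_summ' _ hc y
    have s1 := aux_ps_summ' _ hc1 y
    have s2 := (aux_ps_summ' _ hc2 y).mul_left y
    have e2 : y * ∑' m : ℕ, (((m:ℝ)+1) * (((m+1:ℕ):ℝ)+1) * c (m+1+1)) * y^m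
        = ∑' m : ℕ, (m:ℝ) * (((m:ℝ)+1) * c (m+1)) * y^m := by
      rw [← tsum_mul_left]
      symm
      rw [Summable.tsum_eq_zero_add]
      · simp only [Nat.cast_zero, zero_mul, zero_add]
        refine tsum_congr (fun m => by push_cast; ring)
      · refine (summable_nat_add_iff 1).1 (s2.congr (fun m => ?_))
        push_cast; ring
    have s2' : Summable (fun m : ℕ => (m:ℝ) * (((m:ℝ)+1) * c (m+1)) * y^m) := by
      refine (summable_nat_add_iff 1).1 (s2.congr (fun m => ?_))
      push_cast; ring
    have e2' : y * ∑' m : ℕ, (((m:ℝ)+1) * ((((m+1:ℕ):ℝ)+1) * c (m+1+1))) * y^m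
        = ∑' m : ℕ, (m:ℝ) * (((m:ℝ)+1) * c (m+1)) * y^m := by
      rw [← e2]; congr 1; exact tsum_congr (fun m => by ring)
    rw [e2', ← tsum_mul_left, ← tsum_mul_left, ← s2'.tsum_add (s1.mul_left _),
      ← (s2'.add (s1.mul_left _)).tsum_add (s0.mul_left _)]
    refine (tsum_congr (fun m => ?_)).trans tsum_zero
    linear_combination y^m * hrec m
  · intro x hx
    rw [hd', ← tsum_mul_left]
    refine tsum_congr (fun m => ?_)
    have : x ^ (2 * (m:ℝ) + l + 1) = x ^ (l+1) * (x^2)^m := by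
      rw [← pow_mul, ← Real.rpow_natCast, ← Real.rpow_add_of_nonneg hx (by linarith) (by positivity)]
      congr 1; push_cast; ring
    rw [this]; ring

lemma aux_W (l ω : ℝ) (hl : -(1/2) ≤ l) (d d1 G G1 : ℝ → ℝ)
    (hG : Continuous G) (hG1 : Continuous G1)
    (hdG : ∀ x, 0 ≤ x → d x = x ^ (l+1) * G (x^2))
    (hd1G : ∀ x, 0 < x → d1 x = (l+1) * x^l * G (x^2) + x^(l+1) * (2 * x * G1 (x^2)))
    (hd1 : ∀ x, 0 < x → HasDerivAt d (d1 x) x)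
    (hd2 : ∀ x, 0 < x → HasDerivAt d1 ((l*(l+1)/x^2 - ω^2) * d x) x) (n : ℕ) :
    ∃ W : ℝ → ℝ, W 0 = 0 ∧ Continuous W ∧
      (∀ t, 0 < t → W t = (2*(n:ℝ)+l+1) * t^(2*(n:ℝ)+l) * d t - t^(2*(n:ℝ)+l+1) * d1 t) ∧
      ∀ t, 0 < t → HasDerivAt W
        ((((2 * (n : ℝ) + l + 1) * (2 * (n : ℝ) + l) * t ^ (2 * (n : ℝ) + l - 1))
        - l*(l+1)/t^2 * t^(2*(n:ℝ)+l+1) + ω^2 * t^(2*(n:ℝ)+l+1)) * d t) t := by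
  have hn : (0:ℝ) ≤ n := Nat.cast_nonneg n
  have hW : ∀ t : ℝ, 0 < t →
      2 * n * t^(2*(n:ℝ)+2*l+1) * G (t^2) - 2 * t^(2*(n:ℝ)+2*l+3) * G1 (t^2)
      = (2*(n:ℝ)+l+1) * t^(2*(n:ℝ)+l) * d t - t^(2*(n:ℝ)+l+1) * d1 t := by
    intro t ht
    rw [hdG t ht.le, hd1G t ht]
    have e1 : t^(2*(n:ℝ)+2*l+1) = t^(2*(n:ℝ)+l) * t^l * t := by
      rw [← Real.rpow_add ht, ← Real.rpow_add_one ht.ne']; congr 1; ring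
    have e2 : t^(2*(n:ℝ)+2*l+3) = t^(2*(n:ℝ)+l) * t^l * t * t * t := by
      rw [← Real.rpow_add ht, ← Real.rpow_add_one ht.ne', ← Real.rpow_add_one ht.ne',
        ← Real.rpow_add_one ht.ne']; congr 1; ring
    rw [e1, e2, Real.rpow_add_one ht.ne', Real.rpow_add_one ht.ne']
    ring
  refine ⟨fun t => 2 * n * t^(2*(n:ℝ)+2*l+1) * G (t^2) - 2 * t^(2*(n:ℝ)+2*l+3) * G1 (t^2),
    ?_, ?_, hW, ?_⟩
  · have h3 : 2*(n:ℝ)+2*l+3 ≠ 0 := by linarith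
    simp only [Real.zero_rpow h3]
    rcases Nat.eq_zero_or_pos n with rfl | h
    · simp
    · have : (1:ℝ) ≤ n := by exact_mod_cast h
      have h1 : 2*(n:ℝ)+2*l+1 ≠ 0 := by linarith
      simp [Real.zero_rpow h1]
  · have c1 : Continuous fun t : ℝ => t^(2*(n:ℝ)+2*l+1) :=
      Real.continuous_rpow_const (by linarith)
    have c2 : Continuous fun t : ℝ => t^(2*(n:ℝ)+2*l+3) :=
      Real.continuous_rpow_const (by linarith)
    fun_prop
  · intro t ht
    have h1 : HasDerivAt (fun t : ℝ => t^(2*(n:ℝ)+l)) ((2*(n:ℝ)+l) * t^(2*(n:ℝ)+l-1)) t :=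
      Real.hasDerivAt_rpow_const (Or.inl ht.ne')
    have h2 : HasDerivAt (fun t : ℝ => t^(2*(n:ℝ)+l+1)) ((2*(n:ℝ)+l+1) * t^(2*(n:ℝ)+l)) t := by
      have := Real.hasDerivAt_rpow_const (x := t) (p := 2*(n:ℝ)+l+1) (Or.inl ht.ne')
      rwa [add_sub_cancel_right] at this
    have h3 := ((h1.const_mul (2*(n:ℝ)+l+1)).mul (hd1 t ht)).sub (h2.mul (hd2 t ht))
    refine (h3.congr_of_eventuallyEq ?_).congr_deriv ?_
    · filter_upwards [lt_mem_nhds ht] with s hs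
      exact hW s hs
    · ring

lemma aux_d (l ω : ℝ) (d G G1 G2 : ℝ → ℝ)
    (hG : ∀ y, HasDerivAt G (G1 y) y) (hG1 : ∀ y, HasDerivAt G1 (G2 y) y)
    (hode : ∀ y, y * G2 y + (l + 3/2) * G1 y + ω^2/4 * G y = 0)
    (hdG : ∀ x, 0 ≤ x → d x = x ^ (l+1) * G (x^2)) :
    ∃ d1 : ℝ → ℝ,
    (∀ x, 0 < x → d1 x = (l+1) * x^l * G (x^2) + x^(l+1) * (2 * x * G1 (x^2))) ∧
    (∀ x, 0 < x → HasDerivAt d (d1 x) x) ∧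
    (∀ x, 0 < x → HasDerivAt d1 ((l*(l+1)/x^2 - ω^2) * d x) x) := by
  refine ⟨fun x => (l+1) * x^l * G (x^2) + x^(l+1) * (2 * x * G1 (x^2)), fun _ _ => rfl, ?_, ?_⟩
  all_goals
    intro x hx
    have h2 : HasDerivAt (fun t : ℝ => t^(l+1)) ((l+1) * x^l) x := by
      have := Real.hasDerivAt_rpow_const (x := x) (p := l+1) (Or.inl hx.ne')
      rwa [add_sub_cancel_right] at this
    have hsq : HasDerivAt (fun t : ℝ => t^2) (2 * x) x := by
      simpa using hasDerivAt_pow 2 x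
    have hg : HasDerivAt (fun t => G (t^2)) (G1 (x^2) * (2*x)) x := (hG (x^2)).comp x hsq
    have hg1 : HasDerivAt (fun t => G1 (t^2)) (G2 (x^2) * (2*x)) x := (hG1 (x^2)).comp x hsq
  · refine ((h2.mul hg).congr_of_eventuallyEq ?_).congr_deriv ?_
    · filter_upwards [lt_mem_nhds hx] with s hs
      exact hdG s hs.le
    · ring
  · have h1 : HasDerivAt (fun t : ℝ => t^l) (l * x^(l-1)) x :=
      Real.hasDerivAt_rpow_const (Or.inl hx.ne')
    have h3 := ((h1.const_mul (l+1)).mul hg).add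
      (h2.mul (((hasDerivAt_id x).const_mul 2).mul hg1))
    refine h3.congr_deriv ?_
    rw [hdG x hx.le, Real.rpow_add_one hx.ne', Real.rpow_sub_one hx.ne']
    have := hode (x^2)
    simp only [id, Pi.mul_apply]
    field_simp
    linear_combination 4 * x^2 * this

theorem stmt_16 (b l ω : ℝ) (hb : 0 < b) (hl : -(1/2) ≤ l) (hω : 0 < ω)
    (q : ℝ → ℂ) (hq : ContinuousOn q (Set.Icc 0 b))
    (d : ℝ → ℝ)
    (hd : ∀ x : ℝ, d x = ∑' m : ℕ,
        (-1 : ℝ) ^ m / ((m.factorial : ℝ) * Real.Gamma ((m : ℝ) + l + 3/2)) *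
          (ω / 2) ^ (2 * (m : ℝ) + l + 1/2) * x ^ (2 * (m : ℝ) + l + 1))
    (N : ℕ) (κ κ' κ'' : ℕ → ℝ → ℂ)
    (hκc : ∀ n ≤ N, ContinuousOn (κ n) (Set.Icc 0 b))
    (hκ1 : ∀ n ≤ N, ∀ x ∈ Set.Ioc (0:ℝ) b, HasDerivWithinAt (κ n) (κ' n x) (Set.Ioc 0 b) x)
    (hκ2 : ∀ n ≤ N, ∀ x ∈ Set.Ioc (0:ℝ) b, HasDerivWithinAt (κ' n) (κ'' n x) (Set.Ioc 0 b) x)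
    (hκ2c : ∀ n ≤ N, ContinuousOn (κ'' n) (Set.Ioc 0 b))
    (KN : ℝ → ℝ → ℂ)
    (hKN : ∀ x t : ℝ, KN x t =
      ∑ n ∈ Finset.range (N + 1), κ n x * ((t ^ (2 * (n : ℝ) + l + 1) : ℝ) : ℂ))
    -- the singular hyperbolic equation for K_N (the t-derivatives computed explicitly)
    (hPDE : ∀ x ∈ Set.Ioc (0:ℝ) b, ∀ t ∈ Set.Ioc (0:ℝ) b,
      (∑ n ∈ Finset.range (N + 1), κ'' n x * ((t ^ (2 * (n : ℝ) + l + 1) : ℝ) : ℂ)) -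
        (∑ n ∈ Finset.range (N + 1), κ n x *
          ((((2 * (n : ℝ) + l + 1) * (2 * (n : ℝ) + l) * t ^ (2 * (n : ℝ) + l - 1)) : ℝ) : ℂ)) -
        ((l * (l + 1) / x ^ 2 : ℝ) : ℂ) * KN x t + ((l * (l + 1) / t ^ 2 : ℝ) : ℂ) * KN x t -
        q x * KN x t = 0)
    (qN : ℝ → ℂ)
    (hqN : ∀ x ∈ Set.Ioc (0:ℝ) b, HasDerivWithinAt (fun y => KN y y) (qN x / 2) (Set.Ioc 0 b) x)
    (uN : ℝ → ℂ)
    (huN : ∀ x : ℝ, uN x = (d x : ℂ) + ∫ t in (0:ℝ)..x, KN x t * (d t : ℂ)) :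
    ∃ uN' uN'' : ℝ → ℂ,
      (∀ x ∈ Set.Ioc (0:ℝ) b, HasDerivWithinAt uN (uN' x) (Set.Ioc 0 b) x) ∧
      (∀ x ∈ Set.Ioc (0:ℝ) b, HasDerivWithinAt uN' (uN'' x) (Set.Ioc 0 b) x) ∧
      ∀ x ∈ Set.Ioc (0:ℝ) b,
        uN'' x - (((l * (l + 1) / x ^ 2 : ℝ) : ℂ) + q x) * uN x + ((ω ^ 2 : ℝ) : ℂ) * uN x =
          (qN x - q x) * (d x : ℂ) := by
  obtain ⟨G, G1, G2, hG, hG1, hode, hdG⟩ := aux_G l ω hl hω d hd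
  clear hd
  obtain ⟨d1, hd1G, hd1, hd2⟩ := aux_d l ω d G G1 G2 hG hG1 hode hdG
  have hGc : Continuous G := continuous_iff_continuousAt.2 fun y => (hG y).continuousAt
  have hG1c : Continuous G1 := continuous_iff_continuousAt.2 fun y => (hG1 y).continuousAt
  choose W hW0 hWc hWe hWd using aux_W l ω hl d d1 G G1 hGc hG1c hdG hd1G hd1 hd2
  -- a continuous version of the integrand
  set f : ℕ → ℝ → ℝ := fun n t => t ^ (2 * (n : ℝ) + l + 1) * (t ^ (l+1) * G (t^2)) with hf
  have hfc : ∀ n, Continuous (f n) := by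
    intro n
    have hn : (0:ℝ) ≤ n := Nat.cast_nonneg n
    have c1 : Continuous fun t : ℝ => t^(2*(n:ℝ)+l+1) :=
      Real.continuous_rpow_const (by linarith)
    have c2 : Continuous fun t : ℝ => t^(l+1) :=
      Real.continuous_rpow_const (by linarith)
    simp only [hf]
    fun_prop
  have hfe : ∀ n t, 0 ≤ t → f n t = t ^ (2 * (n : ℝ) + l + 1) * d t := by
    intro n t ht
    rw [hdG t ht]
  set I : ℕ → ℝ → ℝ := fun n x => ∫ t in (0:ℝ)..x, f n t with hI
  have hI0 : ∀ n, I n 0 = 0 := fun n => by simp [hI]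
  have hId : ∀ n x, HasDerivAt (I n) (f n x) x := fun n x =>
    intervalIntegral.integral_hasDerivAt_right ((hfc n).intervalIntegrable _ _)
      ((hfc n).stronglyMeasurableAtFilter _ _) (hfc n).continuousAt
  have hu : ∀ x, 0 ≤ x → uN x = (d x : ℂ) + ∑ n ∈ Finset.range (N+1), κ n x * (I n x : ℂ) := by
    intro x hx
    rw [huN]
    congr 1
    have : ∫ t in (0:ℝ)..x, KN x t * (d t : ℂ) =
        ∫ t in (0:ℝ)..x, ∑ n ∈ Finset.range (N+1), κ n x * ((f n t : ℝ) : ℂ) := by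
      refine intervalIntegral.integral_congr (fun t ht => ?_)
      rw [Set.uIcc_of_le hx] at ht
      beta_reduce
      rw [hKN, Finset.sum_mul]
      refine Finset.sum_congr rfl (fun n _ => ?_)
      rw [hfe n t ht.1]; push_cast; ring
    rw [this, intervalIntegral.integral_finsetSum]
    · refine Finset.sum_congr rfl (fun n _ => ?_)
      rw [intervalIntegral.integral_const_mul, intervalIntegral.integral_ofReal]
    · intro n _
      refine Continuous.intervalIntegrable ?_ _ _
      have := hfc n
      fun_prop
  -- the diagonal derivative
  have hqN' : ∀ x ∈ Set.Ioc (0:ℝ) b, qN x / 2 = ∑ n ∈ Finset.range (N+1),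
      (κ' n x * ((x ^ (2 * (n : ℝ) + l + 1) : ℝ) : ℂ) +
        κ n x * (((2 * (n : ℝ) + l + 1) * x ^ (2 * (n : ℝ) + l) : ℝ) : ℂ)) := by
    intro x hx
    have h : HasDerivWithinAt (fun y => KN y y) (∑ n ∈ Finset.range (N+1),
      (κ' n x * ((x ^ (2 * (n : ℝ) + l + 1) : ℝ) : ℂ) +
        κ n x * (((2 * (n : ℝ) + l + 1) * x ^ (2 * (n : ℝ) + l) : ℝ) : ℂ))) (Set.Ioc 0 b) x := by
      simp only [hKN]
      refine HasDerivWithinAt.fun_sum (fun n hn => ?_)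
      have h2 : HasDerivAt (fun t : ℝ => t^(2*(n:ℝ)+l+1)) ((2*(n:ℝ)+l+1) * x^(2*(n:ℝ)+l)) x := by
        have := Real.hasDerivAt_rpow_const (x := x) (p := 2*(n:ℝ)+l+1) (Or.inl hx.1.ne')
        rwa [add_sub_cancel_right] at this
      exact (hκ1 n (by simpa [Nat.lt_succ_iff] using hn) x hx).mul h2.ofReal_comp.hasDerivWithinAt
    exact (uniqueDiffOn_Ioc 0 b x hx).eq_deriv _ (hqN x hx) h
  -- the integrated hyperbolic equation
  have hIntegrated : ∀ x ∈ Set.Ioc (0:ℝ) b,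
      ∑ n ∈ Finset.range (N+1), (κ'' n x * (I n x : ℂ) - κ n x * (W n x : ℂ)
        + ((ω ^ 2 : ℝ) : ℂ) * (κ n x * (I n x : ℂ))
        - (((l * (l + 1) / x ^ 2 : ℝ) : ℂ) + q x) * (κ n x * (I n x : ℂ))) = 0 := by
    intro x hx
    have key := intervalIntegral.integral_eq_sub_of_hasDerivAt_of_le (a := 0) (b := x)
      (f' := fun _ => (0:ℂ))
      (f := fun t => ∑ n ∈ Finset.range (N+1), (κ'' n x * (I n t : ℂ) - κ n x * (W n t : ℂ)
        + ((ω ^ 2 : ℝ) : ℂ) * (κ n x * (I n t : ℂ))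
        - (((l * (l + 1) / x ^ 2 : ℝ) : ℂ) + q x) * (κ n x * (I n t : ℂ)))) hx.1.le ?_ ?_ ?_
    · simpa [hI0, hW0] using key.symm
    · refine Continuous.continuousOn (continuous_finsetSum _ fun n _ => ?_)
      have h1 := hWc n
      have h2 : Continuous (I n) := continuous_iff_continuousAt.2 fun y => (hId n y).continuousAt
      fun_prop
    · intro t ht
      have hI' := fun n => (hId n t).ofReal_comp
      have hW' := fun n => (hWd n t ht.1).ofReal_comp
      have h := HasDerivAt.fun_sum (u := Finset.range (N+1)) (fun n _ =>
        ((((hI' n).const_mul (κ'' n x)).sub ((hW' n).const_mul (κ n x))).add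
          (((hI' n).const_mul (κ n x)).const_mul ((ω ^ 2 : ℝ) : ℂ))).sub
          (((hI' n).const_mul (κ n x)).const_mul (((l * (l + 1) / x ^ 2 : ℝ) : ℂ) + q x)))
      refine HasDerivAt.congr_deriv h ?_
      have hp := hPDE x hx t ⟨ht.1, ht.2.le.trans hx.2⟩
      have hp2 := congrArg (fun z => z * (d t : ℂ)) hp
      simp only [zero_mul] at hp2
      rw [← hp2, hKN]
      simp only [Finset.mul_sum, Finset.sum_mul, ← Finset.sum_sub_distrib, ← Finset.sum_add_distrib]
      refine Finset.sum_congr rfl (fun n _ => ?_)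
      rw [hfe n t ht.1.le]
      push_cast
      ring
    · exact intervalIntegrable_const
  refine ⟨fun x => (d1 x : ℂ) + ∑ n ∈ Finset.range (N+1), κ' n x * (I n x : ℂ) + KN x x * (d x : ℂ),
    fun x => (((l*(l+1)/x^2 - ω^2) * d x : ℝ) : ℂ) + ∑ n ∈ Finset.range (N+1),
      (κ'' n x * (I n x : ℂ) + κ' n x * (f n x : ℂ)) +
      (qN x / 2 * (d x : ℂ) + KN x x * (d1 x : ℂ)), ?_, ?_, ?_⟩
  · intro x hx
    have h := ((hd1 x hx.1).ofReal_comp.hasDerivWithinAt (s := Set.Ioc 0 b)).add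
      (HasDerivWithinAt.fun_sum (u := Finset.range (N+1)) (fun n hn =>
        (hκ1 n (by simpa [Nat.lt_succ_iff] using hn) x hx).mul
          ((hId n x).ofReal_comp.hasDerivWithinAt (s := Set.Ioc 0 b))))
    refine (h.congr (fun y hy => hu y hy.1.le) (hu x hx.1.le)).congr_deriv ?_
    beta_reduce
    rw [Finset.sum_add_distrib, hKN, Finset.sum_mul, add_assoc]
    congr 2
    refine Finset.sum_congr rfl (fun n _ => ?_)
    rw [hfe n x hx.1.le]; push_cast; ring
  · intro x hx
    exact (((hd2 x hx.1).ofReal_comp.hasDerivWithinAt (s := Set.Ioc 0 b)).add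
      (HasDerivWithinAt.fun_sum (u := Finset.range (N+1)) (fun n hn =>
        (hκ2 n (by simpa [Nat.lt_succ_iff] using hn) x hx).mul
          ((hId n x).ofReal_comp.hasDerivWithinAt (s := Set.Ioc 0 b))))).add
      ((hqN x hx).mul ((hd1 x hx.1).ofReal_comp.hasDerivWithinAt (s := Set.Ioc 0 b)))
  · intro x hx
    have h1 := hIntegrated x hx
    have h2 := hqN' x hx
    have h3 : ∑ n ∈ Finset.range (N+1), κ n x * (W n x : ℂ) =
        (∑ n ∈ Finset.range (N+1),
          κ n x * (((2 * (n : ℝ) + l + 1) * x ^ (2 * (n : ℝ) + l) : ℝ) : ℂ)) * (d x : ℂ)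
        - KN x x * (d1 x : ℂ) := by
      rw [hKN, Finset.sum_mul, Finset.sum_mul, ← Finset.sum_sub_distrib]
      refine Finset.sum_congr rfl (fun n _ => ?_)
      rw [hWe n x hx.1]; push_cast; ring
    have h4 : ∑ n ∈ Finset.range (N+1), κ' n x * (f n x : ℂ) =
        (∑ n ∈ Finset.range (N+1), κ' n x * ((x ^ (2 * (n : ℝ) + l + 1) : ℝ) : ℂ)) * (d x : ℂ) := by
      rw [Finset.sum_mul]
      refine Finset.sum_congr rfl (fun n _ => ?_)
      rw [hfe n x hx.1.le]; push_cast; ring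
    simp only [Finset.sum_add_distrib, Finset.sum_sub_distrib, ← Finset.mul_sum] at h1 h2 ⊢
    rw [h3] at h1
    rw [h4, hu x hx.1.le]
    have e : (((l*(l+1)/x^2 - ω^2) * d x : ℝ) : ℂ) =
      (((l*(l+1)/x^2 : ℝ) : ℂ) - ((ω^2 : ℝ) : ℂ)) * (d x : ℂ) := by push_cast; ring
    rw [e]
    linear_combination h1 - (d x : ℂ) * h2
end

section
/- Let l ≥ -1/2 be real and let σ ∈ (-1,0). Then the hypergeometric series ₂F₁(-l,-l;1;σ) = Σ_{n=0}^∞ ((-l)_n/n!)²·σⁿ converges, and |Σ_{n=0}^∞ ((-l)_n/n!)²·σⁿ| ≤ Σ_{n=0}^{⌊l+1⌋} ((-l)_n/n!)², where (a)_n = a(a+1)⋯(a+n-1) denotes the Pochhammer symbol and ⌊·⌋ the floor function. -/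
theorem alt_aux (c : ℕ → ℝ) (N : ℕ) (s : ℝ) (h0 : ∀ n, 0 ≤ c n)
    (hanti : Antitone (fun k => c (k + N))) (hs0 : 0 ≤ s) (hs1 : s < 1) :
    Summable (fun n => c n * (-s) ^ n) ∧
      |∑' n, c n * (-s) ^ n| ≤ ∑ n ∈ Finset.range (N + 1), c n := by
  have hS : Summable (fun n => c n * (-s) ^ n) := by
    rw [← summable_nat_add_iff N]
    refine Summable.of_norm_bounded (g := fun k => c N * s ^ k)
      ((summable_geometric_of_lt_one hs0 hs1).mul_left _) ?_
    intro k
    have h1 : c (k + N) ≤ c N := by simpa using hanti (Nat.zero_le k)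
    have h2 : s ^ (k + N) ≤ s ^ k := pow_le_pow_of_le_one hs0 hs1.le (by omega)
    rw [Real.norm_eq_abs, abs_mul, abs_pow, abs_neg, abs_of_nonneg hs0, abs_of_nonneg (h0 _)]
    exact mul_le_mul h1 h2 (by positivity) (h0 _)
  refine ⟨hS, ?_⟩
  have ht : Antitone (fun k => c (k + N) * s ^ k) := by
    intro i j hij
    exact mul_le_mul (hanti hij) (pow_le_pow_of_le_one hs0 hs1.le hij) (by positivity) (h0 _)
  have hT : Summable (fun k => (-1 : ℝ) ^ k * (c (k + N) * s ^ k)) := by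
    refine Summable.of_norm_bounded (g := fun k => c N * s ^ k)
      ((summable_geometric_of_lt_one hs0 hs1).mul_left _) ?_
    intro k
    have h1 : c (k + N) ≤ c N := by simpa using hanti (Nat.zero_le k)
    rw [Real.norm_eq_abs, abs_mul, abs_pow, abs_neg, abs_one, one_pow, one_mul,
      abs_of_nonneg (mul_nonneg (h0 _) (by positivity))]
    exact mul_le_mul_of_nonneg_right h1 (by positivity)
  have hlim := hT.hasSum.tendsto_sum_nat
  have lo := ht.alternating_series_le_tendsto hlim 0
  have hi := ht.tendsto_le_alternating_series hlim 0
  simp at lo hi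
  rw [← hS.sum_add_tsum_nat_add N, Finset.sum_range_succ]
  refine (abs_add_le _ _).trans (add_le_add ?_ ?_)
  · refine (Finset.abs_sum_le_sum_abs _ _).trans (Finset.sum_le_sum fun n _ => ?_)
    rw [abs_mul, abs_pow, abs_neg, abs_of_nonneg hs0, abs_of_nonneg (h0 _)]
    exact mul_le_of_le_one_right (h0 _) (pow_le_one₀ hs0 hs1.le)
  · have : ∀ k, c (k + N) * (-s) ^ (k + N)
        = (-s) ^ N * ((-1 : ℝ) ^ k * (c (k + N) * s ^ k)) := by
      intro k
      rw [pow_add, neg_pow s k]; ring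
    simp_rw [this]
    rw [tsum_mul_left, abs_mul, abs_pow, abs_neg, abs_of_nonneg hs0, abs_of_nonneg lo]
    exact (mul_le_of_le_one_left lo (pow_le_one₀ hs0 hs1.le)).trans hi

/-- For `l ≥ -1/2` and `σ ∈ (-1,0)` the hypergeometric series
`₂F₁(-l,-l;1;σ) = Σ ((-l)_n/n!)² σⁿ` converges and is bounded in absolute value by
`Σ_{n=0}^{⌊l+1⌋} ((-l)_n/n!)²`, where `(-l)_n = ∏_{i<n} (-l+i)` is the Pochhammer
symbol. -/
theorem stmt_18 (l σ : ℝ) (hl : -(1/2) ≤ l) (hσ1 : -1 < σ) (hσ2 : σ < 0) :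
    Summable (fun n : ℕ =>
      ((∏ i ∈ Finset.range n, (-l + (i : ℝ))) / (n.factorial : ℝ)) ^ 2 * σ ^ n) ∧
    |∑' n : ℕ, ((∏ i ∈ Finset.range n, (-l + (i : ℝ))) / (n.factorial : ℝ)) ^ 2 * σ ^ n| ≤
      ∑ n ∈ Finset.range (⌊l + 1⌋₊ + 1),
        ((∏ i ∈ Finset.range n, (-l + (i : ℝ))) / (n.factorial : ℝ)) ^ 2 := by
  have key := alt_aux
    (fun n => ((∏ i ∈ Finset.range n, (-l + (i : ℝ))) / (n.factorial : ℝ)) ^ 2)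
    ⌊l + 1⌋₊ (-σ) (fun n => sq_nonneg _) ?_ (by linarith) (by linarith)
  · simpa only [neg_neg] using key
  · refine antitone_nat_of_succ_le fun k => ?_
    have hN := Nat.lt_floor_add_one (l + 1)
    have e : k + 1 + ⌊l + 1⌋₊ = (k + ⌊l + 1⌋₊) + 1 := by ring
    have hm : l < ((k + ⌊l + 1⌋₊ : ℕ) : ℝ) := by
      push_cast
      have : (0 : ℝ) ≤ k := k.cast_nonneg
      linarith
    simp only [e]
    generalize k + ⌊l + 1⌋₊ = m at hm
    rw [Finset.prod_range_succ, Nat.factorial_succ]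
    push_cast
    have hr : ((-l + (m : ℝ)) / (m + 1)) ^ 2 ≤ 1 := by
      have hp : (0 : ℝ) < m + 1 := by positivity
      apply pow_le_one₀
      · exact div_nonneg (by linarith) hp.le
      · rw [div_le_one hp]; linarith
    rw [mul_comm ((m : ℝ) + 1), mul_div_mul_comm, mul_pow]
    exact mul_le_of_le_one_right (sq_nonneg _) hr
end
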